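/- For any finite graph G=(V,E), min over nonempty subsets S ⊆ V with E(S) ≠ ∅ of (|S|−1)/|E(S)| equals min over nonempty F ⊆ E of (|V(F)|−c(F))/|F|, where V(F) is the set of endpoints of edges in F and c(F) is the number of connected components of the subgraph (V(F), F). -/

import Mathlib

open scoped Classical

/-- The number of connected components of the subgraph `(V(F), F)` determined by a set
of edges `F`: connected components of the graph with edge set `F`, restricted to the
set of endpoints of edges of `F`. -/
noncomputable def numComponents {V : Type*} (F : Finset (Sym2 V)) : ℕ :=
  Nat.card ((SimpleGraph.fromEdgeSet (F : Set (Sym2 V))).induce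
    {v : V | ∃ e ∈ F, v ∈ e}).ConnectedComponent

theorem aux_key {V : Type*} [Fintype V] (E : Finset (Sym2 V)) (hd : ∀ e ∈ E, ¬ e.IsDiag)
    (ES : Finset V → Finset (Sym2 V)) (hES : ∀ S e, e ∈ ES S ↔ e ∈ E ∧ ∀ v ∈ e, v ∈ S)
    (r : ℝ) (hr0 : 0 ≤ r) (hr : ∀ S : Finset V, S.Nonempty → r * (ES S).card ≤ (S.card : ℝ) - 1)
    (F : Finset (Sym2 V)) (hF : F ⊆ E) (W : Finset V) (hW : ∀ v, v ∈ W ↔ ∃ e ∈ F, v ∈ e) :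
    r * F.card ≤ (W.card : ℝ) - numComponents F := by
  unfold numComponents
  set H := ((SimpleGraph.fromEdgeSet (F : Set (Sym2 V))).induce {v : V | ∃ e ∈ F, v ∈ e}) with hH
  let S : H.ConnectedComponent → Finset V := fun c =>
    ((Finset.univ : Finset {v : V | ∃ e ∈ F, v ∈ e}).filter
      (fun v => H.connectedComponentMk v = c)).map (Function.Embedding.subtype _)
  have hSne : ∀ c, (S c).Nonempty := by
    intro c
    induction c using SimpleGraph.ConnectedComponent.ind with
    | _ v => exact ⟨v.1, by simp only [S, Finset.mem_map]; exact ⟨v, by simp, rfl⟩⟩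
  have hWc : W.card = ∑ c, (S c).card := by
    have h1 : W.card = (Finset.univ : Finset {v : V | ∃ e ∈ F, v ∈ e}).card := by
      have : W = (Finset.univ : Finset {v : V | ∃ e ∈ F, v ∈ e}).map
          (Function.Embedding.subtype _) := by
        ext v; simp [hW]
      rw [this, Finset.card_map]
    rw [h1, Finset.card_eq_sum_card_fiberwise (f := H.connectedComponentMk) (t := Finset.univ)
      (by intro x _; simp)]
    simp only [S, Finset.card_map]
  have hFsub : F ⊆ Finset.univ.biUnion (fun c => ES (S c)) := by
    intro e he
    induction e using Sym2.ind with
    | _ u v =>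
      have huv : u ≠ v := by
        have := hd _ (hF he)
        simpa using this
      let u' : {v : V | ∃ e ∈ F, v ∈ e} := ⟨u, _, he, by simp⟩
      let v' : {v : V | ∃ e ∈ F, v ∈ e} := ⟨v, _, he, by simp⟩
      have hadj : H.Adj u' v' := by
        simp [hH, u', v', he, huv]
      have hc : H.connectedComponentMk v' = H.connectedComponentMk u' :=
        SimpleGraph.ConnectedComponent.sound hadj.reachable.symm
      rw [Finset.mem_biUnion]
      refine ⟨H.connectedComponentMk u', Finset.mem_univ _, (hES _ _).2 ⟨hF he, ?_⟩⟩
      intro w hw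
      simp only [S, Finset.mem_map]
      rcases Sym2.mem_iff.1 hw with rfl | rfl
      · exact ⟨u', by simp, rfl⟩
      · exact ⟨v', by simpa using hadj.reachable.symm, rfl⟩
  have hFc : (F.card : ℝ) ≤ ∑ c, ((ES (S c)).card : ℝ) := by
    exact_mod_cast (Finset.card_le_card hFsub).trans Finset.card_biUnion_le
  calc r * F.card ≤ r * ∑ c, ((ES (S c)).card : ℝ) := mul_le_mul_of_nonneg_left hFc hr0
    _ = ∑ c, r * ((ES (S c)).card : ℝ) := Finset.mul_sum _ _ _
    _ ≤ ∑ c, (((S c).card : ℝ) - 1) := Finset.sum_le_sum fun c _ => hr _ (hSne c)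
    _ = _ := by
      rw [Finset.sum_sub_distrib, hWc]
      simp [Nat.card_eq_fintype_card]

theorem aux_pos {V : Type*} [Fintype V] (F : Finset (Sym2 V)) (hF : F.Nonempty) :
    1 ≤ numComponents F := by
  obtain ⟨e, he⟩ := hF
  induction e using Sym2.ind with
  | _ u v =>
    unfold numComponents
    haveI : Nonempty ((SimpleGraph.fromEdgeSet (F : Set (Sym2 V))).induce
      {v : V | ∃ e ∈ F, v ∈ e}).ConnectedComponent :=
      ⟨SimpleGraph.connectedComponentMk _ ⟨u, _, he, by simp⟩⟩
    exact Nat.card_pos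


/-- For any finite graph `G = (V,E)` with at least one edge,
`min_{S ⊆ V, E(S) ≠ ∅} (|S|−1)/|E(S)| = min_{∅ ≠ F ⊆ E} (|V(F)|−c(F))/|F|`,
where `V(F)` is the set of endpoints of edges of `F` and `c(F)` the number of
connected components of `(V(F), F)`. -/
theorem min_subset_ratio_eq_min_edgeset_ratio
    {V : Type*} [Fintype V] [DecidableEq V]
    (G : SimpleGraph V) [DecidableRel G.Adj] (hE : G.edgeFinset.Nonempty) :
    sInf {r : ℝ | ∃ S : Finset V, S.Nonempty ∧
        (G.edgeFinset.filter (fun e => ∀ v ∈ e, v ∈ S)).Nonempty ∧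
        r = ((S.card : ℝ) - 1) / ((G.edgeFinset.filter (fun e => ∀ v ∈ e, v ∈ S)).card)}
      = sInf {r : ℝ | ∃ F : Finset (Sym2 V), F ⊆ G.edgeFinset ∧ F.Nonempty ∧
        r = (((Finset.univ.filter (fun v : V => ∃ e ∈ F, v ∈ e)).card : ℝ)
              - numComponents F) / (F.card : ℝ)} := by
  have hdiag : ∀ e ∈ G.edgeFinset, ¬ e.IsDiag := fun e he =>
    G.not_isDiag_of_mem_edgeSet (SimpleGraph.mem_edgeFinset.1 he)
  apply le_antisymm
  · have hb : ∀ x ∈ {r : ℝ | ∃ S : Finset V, S.Nonempty ∧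
        (G.edgeFinset.filter (fun e => ∀ v ∈ e, v ∈ S)).Nonempty ∧
        r = ((S.card : ℝ) - 1) / ((G.edgeFinset.filter (fun e => ∀ v ∈ e, v ∈ S)).card)},
        0 ≤ x := by
      rintro x ⟨S, hS, -, rfl⟩
      have : (1 : ℝ) ≤ S.card := by exact_mod_cast hS.card_pos
      exact div_nonneg (by linarith) (Nat.cast_nonneg _)
    apply le_csInf
    · exact ⟨_, _, subset_rfl, hE, rfl⟩
    · rintro x ⟨F, hF, hne, rfl⟩
      rw [le_div_iff₀ (by exact_mod_cast hne.card_pos)]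
      refine aux_key G.edgeFinset hdiag
        (fun S => G.edgeFinset.filter (fun e => ∀ v ∈ e, v ∈ S))
        (fun S e => by simp only [Finset.mem_filter]) _ (Real.sInf_nonneg hb) ?_ F hF _
        (fun v => by simp only [Finset.mem_filter, Finset.mem_univ, true_and])
      intro S hS
      by_cases hn : (G.edgeFinset.filter (fun e => ∀ v ∈ e, v ∈ S)).Nonempty
      · rw [← le_div_iff₀ (by exact_mod_cast hn.card_pos)]
        exact csInf_le ⟨0, hb⟩ ⟨S, hS, hn, rfl⟩
      · rw [Finset.not_nonempty_iff_eq_empty] at hn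
        have : (1 : ℝ) ≤ S.card := by exact_mod_cast hS.card_pos
        simp only [hn, Finset.card_empty, Nat.cast_zero, mul_zero]
        linarith
  · apply le_csInf
    · obtain ⟨e, he⟩ := hE
      have hm : e ∈ G.edgeFinset.filter (fun e => ∀ v ∈ e, v ∈ (Finset.univ : Finset V)) := by
        simp only [Finset.mem_filter]
        exact ⟨he, fun v _ => Finset.mem_univ v⟩
      refine ⟨_, Finset.univ, ?_, ⟨e, hm⟩, rfl⟩
      induction e using Sym2.ind with
      | _ u v => exact ⟨u, Finset.mem_univ _⟩
    · rintro x ⟨S, hS, hne, rfl⟩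
      refine le_trans (csInf_le ?_ ⟨_, Finset.filter_subset _ _, hne, rfl⟩) ?_
      · refine ⟨0, ?_⟩
        rintro x ⟨F, hF, hne, rfl⟩
        refine div_nonneg ?_ (Nat.cast_nonneg _)
        have := aux_key G.edgeFinset hdiag
          (fun S => G.edgeFinset.filter (fun e => ∀ v ∈ e, v ∈ S))
          (fun S e => by simp only [Finset.mem_filter]) 0 le_rfl
          (fun S hS => by
            have : (1 : ℝ) ≤ S.card := by exact_mod_cast hS.card_pos
            simp only [zero_mul]; linarith) F hF
          (Finset.univ.filter (fun v : V => ∃ e ∈ F, v ∈ e))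
          (fun v => by simp only [Finset.mem_filter, Finset.mem_univ, true_and])
        simpa only [zero_mul] using this
      · apply div_le_div_of_nonneg_right _ (Nat.cast_nonneg _)
        have h1 := aux_pos _ hne
        apply sub_le_sub
        · apply Nat.cast_le.2
          apply Finset.card_le_card
          intro v hv
          simp only [Finset.mem_filter, Finset.mem_univ, true_and] at hv
          obtain ⟨e, ⟨_, he⟩, hve⟩ := hv
          exact he v hve
        · exact_mod_cast h1
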